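/- arXiv:1110.6187 — 2 statements merged into one kernel-verified Lean document; each statement's English description precedes it below -/
import Mathlib

section
/- Let H be an infinite-dimensional real Hilbert space. Then there exist a sequence {X_n} of nonempty closed bounded convex subsets of H and a nonempty closed bounded convex set X ⊆ H such that X_n Fisher-converges to X but h(X_n, X) does not tend to 0. Concretely, if {e_n} is a sequence in the unit sphere of H with ‖e_n − e_m‖ ≥ r for all n ≠ m and some 0 < r < 1, then X_n = conv{e₁, …, e_n} Fisher-converges to X = closed convex hull of {e_n : n ∈ ℕ}, while h(X_n, X) does not converge to 0. -/
open Metric Filter Topology Pointwise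

variable {H : Type*} [NormedAddCommGroup H] [InnerProductSpace ℝ H] [CompleteSpace H]

/-- The excess `e(A,B) = sup_{a ∈ A} d(a, B)`. -/
noncomputable def excess (A B : Set H) : ℝ := sSup ((fun a => infDist a B) '' A)

/-- The Pompeiu–Hausdorff distance `h(A,B) = max (e(A,B)) (e(B,A))`. -/
noncomputable def hdist (A B : Set H) : ℝ := max (excess A B) (excess B A)

/-- Fisher convergence: `e(Xₙ, L) → 0` and `d(z, Xₙ) → 0` for every `z ∈ L`. -/
def FisherConv (X : ℕ → Set H) (L : Set H) : Prop :=
  Tendsto (fun n => excess (X n) L) atTop (𝓝 0) ∧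
    ∀ z ∈ L, Tendsto (fun n => infDist z (X n)) atTop (𝓝 0)

theorem aux_hull_subset (e : ℕ → H) (h1 : ∀ n, ‖e n‖ = 1) :
    closure (convexHull ℝ (Set.range e)) ⊆ closedBall (0 : H) 1 := by
  refine closure_minimal (convexHull_min ?_ (convex_closedBall _ _)) isClosed_closedBall
  rintro _ ⟨n, rfl⟩
  simp [h1 n]

theorem aux_compact (e : ℕ → H) (n : ℕ) : IsCompact (convexHull ℝ (e '' Set.Iic n)) :=
  ((Set.finite_Iic n).image e).isCompact_convexHull (𝕜 := ℝ)

theorem aux_nonempty (e : ℕ → H) (n : ℕ) : (convexHull ℝ (e '' Set.Iic n)).Nonempty :=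
  ⟨e 0, subset_convexHull ℝ _ ⟨0, Nat.zero_le n, rfl⟩⟩

theorem aux_mono (e : ℕ → H) : Monotone (fun n => convexHull ℝ (e '' Set.Iic n)) :=
  fun _ _ h => convexHull_mono (Set.image_mono (Set.Iic_subset_Iic.2 h))

theorem aux_union (e : ℕ → H) :
    convexHull ℝ (Set.range e) ⊆ ⋃ n, convexHull ℝ (e '' Set.Iic n) := by
  refine convexHull_min ?_ ((aux_mono e).directed_le.convex_iUnion fun _ => convex_convexHull ℝ _)
  rintro _ ⟨n, rfl⟩
  exact Set.mem_iUnion.2 ⟨n, subset_convexHull ℝ _ ⟨n, le_refl n, rfl⟩⟩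

theorem aux_fisher (e : ℕ → H) :
    FisherConv (fun n => convexHull ℝ (e '' Set.Iic n))
          (closure (convexHull ℝ (Set.range e))) := by
  constructor
  · have : ∀ n, excess (convexHull ℝ (e '' Set.Iic n))
        (closure (convexHull ℝ (Set.range e))) = 0 := by
      intro n
      have h0 : ∀ x ∈ (fun a => infDist a (closure (convexHull ℝ (Set.range e)))) ''
          (convexHull ℝ (e '' Set.Iic n)), x = 0 := by
        rintro _ ⟨a, ha, rfl⟩
        exact infDist_zero_of_mem
          (subset_closure (convexHull_mono (Set.image_subset_range _ _) ha))
      exact le_antisymm (Real.sSup_nonpos fun x hx => (h0 x hx).le)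
        (Real.sSup_nonneg fun x hx => (h0 x hx).ge)
    simp only [this]
    exact tendsto_const_nhds
  · intro z hz
    rw [Metric.tendsto_atTop]
    intro ε hε
    obtain ⟨w, hw, hzw⟩ := Metric.mem_closure_iff.1 hz ε hε
    obtain ⟨N, hN⟩ := Set.mem_iUnion.1 (aux_union e hw)
    refine ⟨N, fun n hn => ?_⟩
    rw [Real.dist_eq, sub_zero, abs_of_nonneg infDist_nonneg]
    exact (infDist_le_dist_of_mem (aux_mono e hn hN)).trans_lt hzw

theorem aux_not (e : ℕ → H) (r : ℝ) (hr : 0 < r) (h1 : ∀ n, ‖e n‖ = 1)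
    (hs : ∀ n m, n ≠ m → r ≤ ‖e n - e m‖) :
    ¬ Tendsto
            (fun n => hdist (convexHull ℝ (e '' Set.Iic n))
              (closure (convexHull ℝ (Set.range e))))
            atTop (𝓝 0) := by
  intro h
  obtain ⟨n, hn⟩ := (h.eventually (gt_mem_nhds (show (0 : ℝ) < r / 4 by positivity))).exists
  have hn := (le_max_right _ _).trans_lt hn
  have hb : BddAbove ((fun a => infDist a (convexHull ℝ (e '' Set.Iic n))) ''
      (closure (convexHull ℝ (Set.range e)))) := by
    refine ⟨2, ?_⟩
    rintro _ ⟨a, ha, rfl⟩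
    have h0 : e 0 ∈ convexHull ℝ (e '' Set.Iic n) :=
      subset_convexHull ℝ _ ⟨0, Nat.zero_le n, rfl⟩
    have ha' := aux_hull_subset e h1 ha
    rw [mem_closedBall_zero_iff] at ha'
    have := norm_sub_le a (e 0)
    have h3 := infDist_le_dist_of_mem (x := a) h0
    rw [dist_eq_norm] at h3
    have := h1 0
    change infDist a _ ≤ 2
    linarith
  obtain ⟨t, ht, hcov⟩ := Metric.totallyBounded_iff.1 (aux_compact e n).totallyBounded
    (r / 4) (by positivity)
  have key : ∀ m, ∃ c ∈ t, dist (e m) c < r / 2 := by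
    intro m
    have hm : infDist (e m) (convexHull ℝ (e '' Set.Iic n)) < r / 4 :=
      (le_csSup hb ⟨e m, subset_closure (subset_convexHull ℝ _ ⟨m, rfl⟩), rfl⟩).trans_lt hn
    obtain ⟨y, hy, hy'⟩ := (infDist_lt_iff (aux_nonempty e n)).1 hm
    obtain ⟨c, hc, hyc⟩ := Set.mem_iUnion₂.1 (hcov hy)
    refine ⟨c, hc, ?_⟩
    rw [mem_ball] at hyc
    have := dist_triangle (e m) y c
    linarith
  choose c hc hd using key
  have : Finite t := ht
  obtain ⟨a, b, hab, hE⟩ := Finite.exists_ne_map_eq_of_infinite (fun m => (⟨c m, hc m⟩ : t))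
  have hE : c a = c b := congrArg Subtype.val hE
  have h2 := hs a b hab
  rw [← dist_eq_norm] at h2
  have := dist_triangle_right (e a) (e b) (c a)
  have h3 := hd a
  have h4 := hd b
  rw [← hE] at h4
  linarith

theorem aux_exists (hH : ¬ FiniteDimensional ℝ H) : ∃ v : ℕ → H, Orthonormal ℝ v := by
  let b := Module.Basis.ofVectorSpace ℝ H
  have : Infinite (Module.Basis.ofVectorSpaceIndex ℝ H) := by
    by_contra hf
    rw [not_infinite_iff_finite] at hf
    exact hH (Module.Finite.of_basis b)
  have hl := b.linearIndependent.comp _ (Infinite.natEmbedding _).injective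
  exact ⟨_, InnerProductSpace.gramSchmidtNormed_orthonormal hl⟩

/-- Example 1: in an infinite-dimensional real Hilbert space there is a sequence of
nonempty closed bounded convex sets Fisher-converging to a nonempty closed bounded
convex set without converging in the Pompeiu–Hausdorff metric.  Concretely, for any
`r`-separated sequence `{eₙ}` in the unit sphere (`0 < r < 1`), the sets
`Xₙ = conv{e₀, …, eₙ}` Fisher-converge to the closed convex hull of `{eₙ}` while
`h(Xₙ, X)` does not tend to `0`. -/
theorem fisher_not_hausdorff (hH : ¬ FiniteDimensional ℝ H) :
    (∃ (X : ℕ → Set H) (L : Set H),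
      (∀ n, (X n).Nonempty ∧ IsClosed (X n) ∧ Bornology.IsBounded (X n) ∧
        Convex ℝ (X n)) ∧
      (L.Nonempty ∧ IsClosed L ∧ Bornology.IsBounded L ∧ Convex ℝ L) ∧
      FisherConv X L ∧
      ¬ Tendsto (fun n => hdist (X n) L) atTop (𝓝 0)) ∧
    ∀ (e : ℕ → H) (r : ℝ), 0 < r → r < 1 →
      (∀ n, ‖e n‖ = 1) → (∀ n m, n ≠ m → r ≤ ‖e n - e m‖) →
      FisherConv (fun n => convexHull ℝ (e '' Set.Iic n))
          (closure (convexHull ℝ (Set.range e))) ∧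
        ¬ Tendsto
            (fun n => hdist (convexHull ℝ (e '' Set.Iic n))
              (closure (convexHull ℝ (Set.range e))))
            atTop (𝓝 0) := by
  have main : ∀ (e : ℕ → H) (r : ℝ), 0 < r → r < 1 →
      (∀ n, ‖e n‖ = 1) → (∀ n m, n ≠ m → r ≤ ‖e n - e m‖) →
      FisherConv (fun n => convexHull ℝ (e '' Set.Iic n))
          (closure (convexHull ℝ (Set.range e))) ∧
        ¬ Tendsto
            (fun n => hdist (convexHull ℝ (e '' Set.Iic n))
              (closure (convexHull ℝ (Set.range e))))
            atTop (𝓝 0) :=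
    fun e r hr _ h1 hs => ⟨aux_fisher e, aux_not e r hr h1 hs⟩
  refine ⟨?_, main⟩
  obtain ⟨e, he⟩ := aux_exists hH
  have hs : ∀ n m, n ≠ m → (1 / 2 : ℝ) ≤ ‖e n - e m‖ := by
    intro n m hnm
    have h := norm_sub_sq_real (e n) (e m)
    rw [he.2 hnm, he.1 n, he.1 m] at h
    nlinarith [norm_nonneg (e n - e m)]
  obtain ⟨hF, hN⟩ := main e (1 / 2) (by norm_num) (by norm_num) he.1 hs
  refine ⟨_, _, fun n => ⟨aux_nonempty e n, (aux_compact e n).isClosed,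
    (aux_compact e n).isBounded, convex_convexHull ℝ _⟩,
    ⟨?_, isClosed_closure, isBounded_closedBall.subset (aux_hull_subset e he.1),
      (convex_convexHull ℝ _).closure⟩, hF, hN⟩
  exact ⟨e 0, subset_closure (subset_convexHull ℝ _ ⟨0, rfl⟩)⟩
end

section
/- Let H be an infinite-dimensional real Hilbert space with closed unit ball B̄. Then there exists a sequence {X_n} of nonempty closed bounded convex subsets of H such that X_n Wijsman-converges to B̄ but does not Fisher-converge to B̄. Concretely, if {e_n} is a sequence in the unit sphere of H with ‖e_n − e_m‖ ≥ r for all n ≠ m for some 0 < r < 1, and 1 < λ < 2/√(4 − r²), then the sets X_n = closed convex hull of ({λ e_n} ∪ B̄) satisfy: d(z, X_n) → d(z, B̄) for every z ∈ H, while e(X_n, B̄) = λ − 1 > 0 for every n, so e(X_n, B̄) does not tend to 0. -/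
open Metric Filter Topology Pointwise

variable {H : Type*} [NormedAddCommGroup H] [InnerProductSpace ℝ H] [CompleteSpace H]

lemma aux_infDist_ge (x u : H) (X : Set H) (hX : X.Nonempty) (hu : ‖u‖ = 1)
    (h : ∀ y ∈ X, inner ℝ y u ≤ 1) : inner ℝ x u - 1 ≤ infDist x X := by
  rw [le_infDist hX]
  intro y hy
  have h1 := h y hy
  have h2 : inner ℝ (x - y) u ≤ ‖x - y‖ * ‖u‖ := real_inner_le_norm _ _
  rw [inner_sub_left, hu, mul_one] at h2
  rw [dist_eq_norm]
  linarith

lemma aux_infDist_le (x : H) (hx : 1 ≤ ‖x‖) : infDist x (closedBall (0 : H) 1) ≤ ‖x‖ - 1 := by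
  have hp : 0 < ‖x‖ := by linarith
  have hm : ‖x‖⁻¹ • x ∈ closedBall (0 : H) 1 := by
    simp [norm_smul, hp.ne']
  refine (infDist_le_dist_of_mem hm).trans ?_
  have : x - ‖x‖⁻¹ • x = (1 - ‖x‖⁻¹) • x := by rw [sub_smul, one_smul]
  rw [dist_eq_norm, this, norm_smul, Real.norm_eq_abs,
    abs_of_nonneg (by rw [sub_nonneg]; exact inv_le_one_of_one_le₀ hx), sub_mul,
    inv_mul_cancel₀ hp.ne', one_mul]

lemma aux_ball_inner (u y : H) (hu : ‖u‖ = 1) (hy : y ∈ closedBall (0 : H) 1) :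
    inner ℝ y u ≤ 1 := by
  have h2 : inner ℝ y u ≤ ‖y‖ * ‖u‖ := real_inner_le_norm _ _
  rw [hu, mul_one] at h2
  have : ‖y‖ ≤ 1 := by simpa using hy
  linarith

lemma aux_X_inner (a u : H) (hu : ‖u‖ = 1) (ha : inner ℝ a u ≤ 1) :
    ∀ y ∈ closure (convexHull ℝ ({a} ∪ closedBall (0 : H) 1)), inner ℝ y u ≤ 1 := by
  have hc : IsClosed {y : H | inner ℝ y u ≤ 1} :=
    isClosed_le (by fun_prop) continuous_const
  have hv : Convex ℝ {y : H | inner ℝ y u ≤ 1} := by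
    intro x hx y hy s t hs ht hst
    simp only [Set.mem_setOf_eq] at *
    rw [inner_add_left, real_inner_smul_left, real_inner_smul_left]
    nlinarith
  refine closure_minimal (convexHull_min ?_ hv) hc
  rintro y (rfl | hy)
  · exact ha
  · exact aux_ball_inner u y hu hy

lemma aux_ball_sub (a : H) :
    closedBall (0 : H) 1 ⊆ closure (convexHull ℝ ({a} ∪ closedBall (0 : H) 1)) :=
  Set.subset_union_right.trans ((subset_convexHull ℝ _).trans subset_closure)

lemma aux_sub_ball (a : H) (l : ℝ) (hl : 1 ≤ l) (ha : ‖a‖ = l) :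
    closure (convexHull ℝ ({a} ∪ closedBall (0 : H) 1)) ⊆ closedBall (0 : H) l := by
  refine closure_minimal (convexHull_min ?_ (convex_closedBall _ _)) isClosed_closedBall
  rintro y (rfl | hy)
  · simp [ha]
  · exact closedBall_subset_closedBall hl hy

lemma aux_infDist_lower (x : H) : ‖x‖ - 1 ≤ infDist x (closedBall (0 : H) 1) := by
  rw [le_infDist ⟨0, by simp⟩]
  intro y hy
  have : ‖y‖ ≤ 1 := by simpa using hy
  rw [dist_eq_norm]
  have := norm_sub_norm_le x y
  linarith

lemma aux_excess (a : H) (l : ℝ) (hl : 1 < l) (ha : ‖a‖ = l) :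
    excess (closure (convexHull ℝ ({a} ∪ closedBall (0 : H) 1))) (closedBall (0 : H) 1)
      = l - 1 := by
  apply IsGreatest.csSup_eq
  refine ⟨⟨a, subset_closure (subset_convexHull ℝ _ (by simp)), ?_⟩, ?_⟩
  · apply le_antisymm
    · have := aux_infDist_le a (by linarith)
      simpa [ha] using this
    · have := aux_infDist_lower a
      simpa [ha] using this
  · rintro _ ⟨x, hx, rfl⟩
    have hx' : ‖x‖ ≤ l := by simpa using aux_sub_ball a l hl.le ha hx
    dsimp only
    rcases le_total 1 ‖x‖ with h | h
    · have := aux_infDist_le x h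
      linarith
    · rw [infDist_zero_of_mem (by simpa using h)]
      linarith

lemma aux_wijsman (e : ℕ → H) (r lam : ℝ) (hr : 0 < r) (hr1 : r < 1)
    (hl : 1 < lam) (hl2 : lam < 2 / Real.sqrt (4 - r ^ 2))
    (he : ∀ n, ‖e n‖ = 1) (hs : ∀ n m, n ≠ m → r ≤ ‖e n - e m‖) (z : H) :
    Tendsto (fun n => infDist z
            (closure (convexHull ℝ ({lam • e n} ∪ closedBall (0 : H) 1))))
          atTop (𝓝 (infDist z (closedBall (0 : H) 1))) := by
  have hne : (closedBall (0 : H) 1).Nonempty := ⟨0, by simp⟩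
  rcases le_total ‖z‖ 1 with h | h
  · have hz : z ∈ closedBall (0 : H) 1 := by simpa using h
    rw [infDist_zero_of_mem hz]
    refine tendsto_const_nhds.congr fun n => ?_
    rw [infDist_zero_of_mem (aux_ball_sub _ hz)]
  have hp : 0 < ‖z‖ := by linarith
  set u : H := ‖z‖⁻¹ • z with hu_def
  have hu : ‖u‖ = 1 := by simp [hu_def, norm_smul, hp.ne']
  have hzu : inner ℝ z u = ‖z‖ := by
    rw [hu_def, real_inner_smul_right, real_inner_self_eq_norm_sq]
    field_simp
  have key : ∀ n m, n ≠ m → 1 < inner ℝ (lam • e n) u → 1 < inner ℝ (lam • e m) u → False := by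
    intro n m hnm h1 h2
    rw [real_inner_smul_left] at h1 h2
    have hpos : 0 < 4 - r ^ 2 := by nlinarith
    have hsq := Real.sq_sqrt hpos.le
    have hsp := Real.sqrt_pos.mpr hpos
    rw [lt_div_iff₀ hsp] at hl2
    have h3 : inner ℝ (e n + e m) u ≤ ‖e n + e m‖ * ‖u‖ := real_inner_le_norm _ _
    rw [hu, mul_one, inner_add_left] at h3
    have h4 : 2 < lam * ‖e n + e m‖ := by nlinarith
    have h5 := parallelogram_law_with_norm ℝ (e n) (e m)
    rw [he, he] at h5
    have h6 := hs n m hnm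
    have h7 : Real.sqrt (4 - r ^ 2) < ‖e n + e m‖ := by
      refine lt_of_mul_lt_mul_left (a := lam) ?_ (by linarith)
      linarith
    nlinarith
  have hev : ∀ᶠ n in atTop, inner ℝ (lam • e n) u ≤ 1 := by
    by_cases hex : ∃ n, 1 < inner ℝ (lam • e n) u
    · obtain ⟨n, hn⟩ := hex
      filter_upwards [eventually_gt_atTop n] with m hm
      by_contra! hc
      exact key n m hm.ne hn hc
    · push Not at hex
      exact Eventually.of_forall hex
  refine tendsto_const_nhds.congr' ?_
  filter_upwards [hev] with n hn
  apply le_antisymm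
  · have h1 := aux_infDist_ge z u _ (hne.mono (aux_ball_sub (lam • e n)))
      hu (aux_X_inner _ u hu hn)
    have h2 := aux_infDist_le z h
    linarith
  · exact infDist_le_infDist_of_subset (aux_ball_sub _) hne

lemma aux_exists_seq (hH : ¬ FiniteDimensional ℝ H) :
    ∃ e : ℕ → H, (∀ n, ‖e n‖ = 1) ∧ ∀ n m, n ≠ m → (1 / 2 : ℝ) ≤ ‖e n - e m‖ := by
  let b := Module.Basis.ofVectorSpace ℝ H
  have : Infinite (Module.Basis.ofVectorSpaceIndex ℝ H) := by
    by_contra hc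
    rw [not_infinite_iff_finite] at hc
    exact hH (Module.Finite.of_basis b)
  have hli : LinearIndependent ℝ (b ∘ Infinite.natEmbedding _) :=
    b.linearIndependent.comp _ (Infinite.natEmbedding _).injective
  have ho := InnerProductSpace.gramSchmidtNormed_orthonormal (𝕜 := ℝ) hli
  refine ⟨_, ho.1, fun n m hnm => ?_⟩
  set f := InnerProductSpace.gramSchmidtNormed ℝ (b ∘ Infinite.natEmbedding _)
  have h1 := norm_sub_sq_real (f n) (f m)
  rw [ho.1, ho.1, ho.2 hnm] at h1
  nlinarith [norm_nonneg (f n - f m)]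

/-- Example 2: in an infinite-dimensional real Hilbert space there is a sequence of
nonempty closed bounded convex sets Wijsman-converging to the closed unit ball `B̄`
without Fisher-converging to it.  Concretely, for an `r`-separated sequence `{eₙ}` in
the unit sphere (`0 < r < 1`) and `1 < λ < 2/√(4 − r²)`, the sets
`Xₙ = co̅({λeₙ} ∪ B̄)` satisfy `d(z, Xₙ) → d(z, B̄)` for every `z`, while
`e(Xₙ, B̄) = λ − 1 > 0` for every `n`, so `e(Xₙ, B̄)` does not tend to `0`. -/
theorem wijsman_not_fisher (hH : ¬ FiniteDimensional ℝ H) :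
    (∃ X : ℕ → Set H,
      (∀ n, (X n).Nonempty ∧ IsClosed (X n) ∧ Bornology.IsBounded (X n) ∧
        Convex ℝ (X n)) ∧
      (∀ z : H, Tendsto (fun n => infDist z (X n)) atTop
        (𝓝 (infDist z (closedBall (0 : H) 1)))) ∧
      ¬ FisherConv X (closedBall (0 : H) 1)) ∧
    ∀ (e : ℕ → H) (r lam : ℝ), 0 < r → r < 1 →
      1 < lam → lam < 2 / Real.sqrt (4 - r ^ 2) →
      (∀ n, ‖e n‖ = 1) → (∀ n m, n ≠ m → r ≤ ‖e n - e m‖) →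
      (∀ z : H, Tendsto
          (fun n => infDist z
            (closure (convexHull ℝ ({lam • e n} ∪ closedBall (0 : H) 1))))
          atTop (𝓝 (infDist z (closedBall (0 : H) 1)))) ∧
      (∀ n, excess (closure (convexHull ℝ ({lam • e n} ∪ closedBall (0 : H) 1)))
          (closedBall (0 : H) 1) = lam - 1) ∧
      (0 < lam - 1) ∧
      ¬ Tendsto
          (fun n => excess (closure (convexHull ℝ ({lam • e n} ∪ closedBall (0 : H) 1)))
            (closedBall (0 : H) 1))
          atTop (𝓝 0) := by
  have main : ∀ (e : ℕ → H) (r lam : ℝ), 0 < r → r < 1 →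
      1 < lam → lam < 2 / Real.sqrt (4 - r ^ 2) →
      (∀ n, ‖e n‖ = 1) → (∀ n m, n ≠ m → r ≤ ‖e n - e m‖) →
      (∀ z : H, Tendsto
          (fun n => infDist z
            (closure (convexHull ℝ ({lam • e n} ∪ closedBall (0 : H) 1))))
          atTop (𝓝 (infDist z (closedBall (0 : H) 1)))) ∧
      (∀ n, excess (closure (convexHull ℝ ({lam • e n} ∪ closedBall (0 : H) 1)))
          (closedBall (0 : H) 1) = lam - 1) ∧
      (0 < lam - 1) ∧
      ¬ Tendsto
          (fun n => excess (closure (convexHull ℝ ({lam • e n} ∪ closedBall (0 : H) 1)))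
            (closedBall (0 : H) 1))
          atTop (𝓝 0) := by
    intro e r lam hr hr1 hl hl2 he hs
    have hex : ∀ n, excess (closure (convexHull ℝ ({lam • e n} ∪ closedBall (0 : H) 1)))
          (closedBall (0 : H) 1) = lam - 1 := fun n =>
      aux_excess _ lam hl (by rw [norm_smul, he, Real.norm_eq_abs, abs_of_pos (by linarith), mul_one])
    refine ⟨aux_wijsman e r lam hr hr1 hl hl2 he hs, hex, by linarith, ?_⟩
    intro ht
    simp only [hex] at ht
    have := tendsto_nhds_unique ht tendsto_const_nhds
    linarith
  refine ⟨?_, main⟩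
  obtain ⟨e, he, hs⟩ := aux_exists_seq hH
  have hlt : (1 : ℝ) < 2 / Real.sqrt (4 - (1 / 2) ^ 2) := by
    rw [lt_div_iff₀ (Real.sqrt_pos.mpr (by norm_num)), one_mul,
      Real.sqrt_lt' (by norm_num)]
    norm_num
  obtain ⟨lam, hl, hl2⟩ := exists_between hlt
  obtain ⟨h1, -, -, h4⟩ := main e (1 / 2) lam (by norm_num) (by norm_num) hl hl2 he hs
  refine ⟨fun n => closure (convexHull ℝ ({lam • e n} ∪ closedBall (0 : H) 1)),
    fun n => ⟨⟨0, aux_ball_sub _ (by simp)⟩, isClosed_closure, ?_, (convex_convexHull ℝ _).closure⟩,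
    h1, fun hF => h4 hF.1⟩
  exact isBounded_closedBall.subset (aux_sub_ball _ lam hl.le
    (by rw [norm_smul, he, Real.norm_eq_abs, abs_of_pos (by linarith), mul_one]))
end
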